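/- With A(x) = F(r(x))^{1/2}/r(x) and B(x) = F(r(x))^{1/2}, one has A(x) → 1/l and B(x) + l/x → 0 as x → 0⁻. In particular B(x) - (-l/x) = o(1/|x|) as x → 0⁻. -/

import Mathlib

open MeasureTheory Filter Asymptotics

noncomputable section

/-- The metric coefficient `F(r) = 1 - 2M/r + r²/l²`. -/
def Fsads (M l r : ℝ) : ℝ := 1 - 2*M/r + r^2/l^2

/-- The Regge–Wheeler coordinate `x(r) = -∫_r^∞ F(s)⁻¹ ds`. -/
def xcoord (M l r : ℝ) : ℝ := -∫ s in Set.Ioi r, (Fsads M l s)⁻¹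

/-- The potential `A(x) = F(r(x))^{1/2}/r(x)`, where `r(x)` is the inverse of the
Regge–Wheeler coordinate. -/
def Asads (M l : ℝ) (rx : ℝ → ℝ) (x : ℝ) : ℝ := Real.sqrt (Fsads M l (rx x)) / rx x

/-- The potential `B(x) = F(r(x))^{1/2}`. -/
def Bsads (M l : ℝ) (rx : ℝ → ℝ) (x : ℝ) : ℝ := Real.sqrt (Fsads M l (rx x))

/-! As `s → ∞`, `F(s) ~ s²/l²`, so `-x(r) = ∫_r^∞ ds/F(s) ~ l²/r`. More precisely, for large
`r` the bounds `s²/l² ≤ F(s) ≤ 1 + s²/l²` place both `F(r)^{1/2}` and `-l/x(r)` in the interval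
`[r/l, r/l + l/r]`, whose length `l/r` tends to `0`. Since `x` is monotone and negative, its
inverse `r(x)` tends to `∞` as `x → 0⁻`, and the asymptotics in `r` transfer to asymptotics
in `x`. -/

open Set Topology

lemma inv_mul_sq_eq_mul_rpow_neg_two (c s : ℝ) : (c * s ^ 2)⁻¹ = c⁻¹ * s ^ (-2 : ℝ) := by
  rw [Real.rpow_neg_ofNat, zpow_neg, zpow_ofNat, mul_inv]

lemma integrableOn_Ioi_inv_mul_sq (c : ℝ) {r : ℝ} (hr : 0 < r) :
    IntegrableOn (fun s : ℝ => (c * s ^ 2)⁻¹) (Ioi r) := by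
  simp only [inv_mul_sq_eq_mul_rpow_neg_two]
  exact (integrableOn_Ioi_rpow_of_lt (by norm_num) hr).const_mul c⁻¹

lemma integral_Ioi_inv_mul_sq (c : ℝ) {r : ℝ} (hr : 0 < r) :
    ∫ s in Ioi r, (c * s ^ 2)⁻¹ = (c * r)⁻¹ := by
  calc ∫ s in Ioi r, (c * s ^ 2)⁻¹ = ∫ s in Ioi r, c⁻¹ * s ^ (-2 : ℝ) := by
        simp only [inv_mul_sq_eq_mul_rpow_neg_two]
    _ = c⁻¹ * (-r ^ (-2 + 1 : ℝ) / (-2 + 1)) := by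
        rw [integral_const_mul, integral_Ioi_rpow_of_lt (by norm_num) hr]
    _ = c⁻¹ * r⁻¹ := by norm_num [Real.rpow_neg_one]
    _ = (c * r)⁻¹ := (mul_inv c r).symm

lemma integral_Ioi_inv_le_of_mul_sq_le {f : ℝ → ℝ} {c r : ℝ} (hc : 0 < c) (hr : 0 < r)
    (hf : ∀ s > r, c * s ^ 2 ≤ f s) : ∫ s in Ioi r, (f s)⁻¹ ≤ (c * r)⁻¹ := by
  have hpos : ∀ s > r, 0 < c * s ^ 2 := fun s hs => by
    have := hr.trans hs
    positivity
  rw [← integral_Ioi_inv_mul_sq c hr]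
  refine integral_mono_of_nonneg ?_ (integrableOn_Ioi_inv_mul_sq c hr) ?_ <;>
    refine (ae_restrict_iff' measurableSet_Ioi).2 (ae_of_all _ fun s hs => ?_)
  · exact inv_nonneg.2 ((hpos s hs).le.trans (hf s hs))
  · exact inv_anti₀ (hpos s hs) (hf s hs)

lemma le_integral_Ioi_inv_of_le_mul_sq {f : ℝ → ℝ} {c r : ℝ} (hr : 0 < r)
    (hint : IntegrableOn (fun s => (f s)⁻¹) (Ioi r)) (hpos : ∀ s > r, 0 < f s)
    (hf : ∀ s > r, f s ≤ c * s ^ 2) : (c * r)⁻¹ ≤ ∫ s in Ioi r, (f s)⁻¹ := by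
  rw [← integral_Ioi_inv_mul_sq c hr]
  exact setIntegral_mono_on (integrableOn_Ioi_inv_mul_sq c hr) hint measurableSet_Ioi
    fun s hs => inv_anti₀ (hpos s hs) (hf s hs)

lemma integrableOn_Ioi_inv_of_mul_sq_le {f : ℝ → ℝ} {c r : ℝ} (hc : 0 < c)
    (hcont : ContinuousOn f (Ici r)) (hne : ∀ s ∈ Ici r, f s ≠ 0)
    (hf : ∀ᶠ s in atTop, c * s ^ 2 ≤ f s) : IntegrableOn (fun s => (f s)⁻¹) (Ioi r) := by
  have hloc : LocallyIntegrableOn (fun s => (f s)⁻¹) (Ici r) :=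
    (hcont.inv₀ hne).locallyIntegrableOn measurableSet_Ici
  have hO : (fun s => (f s)⁻¹) =O[atTop] fun s : ℝ => (c * s ^ 2)⁻¹ := by
    refine IsBigO.of_norm_eventuallyLE ?_
    filter_upwards [hf, eventually_gt_atTop 0] with s hs hs₀
    have hpos : 0 < c * s ^ 2 := by positivity
    rw [norm_inv, Real.norm_of_nonneg (hpos.le.trans hs)]
    exact inv_anti₀ hpos hs
  exact (hloc.integrableOn_of_isBigO_atTop hO
    ⟨Ioi 1, Ioi_mem_atTop 1, integrableOn_Ioi_inv_mul_sq c one_pos⟩).mono_set Ioi_subset_Ici_self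

lemma tendsto_atTop_of_monotoneOn_rightInverse {α β : Type*} [LinearOrder α] [NoMaxOrder α]
    [LinearOrder β] [TopologicalSpace β] [OrderTopology β] {f : α → β} {g : β → α} {a : α} {b : β}
    (hf : MonotoneOn f (Ioi a)) (hfb : ∀ y > a, f y < b)
    (hg : ∀ x < b, a < g x ∧ f (g x) = x) : Tendsto g (𝓝[<] b) atTop := by
  refine tendsto_atTop.2 fun R => ?_
  obtain ⟨y, hy⟩ := exists_gt (max a R)
  obtain ⟨hay, hRy⟩ := max_lt_iff.1 hy
  filter_upwards [self_mem_nhdsWithin, mem_nhdsWithin_of_mem_nhds (lt_mem_nhds (hfb y hay))]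
    with x hxb hyx
  obtain ⟨hax, hfx⟩ := hg x hxb
  by_contra! hxR
  exact (hyx.trans_eq hfx.symm).not_ge (hf hax hay (hxR.trans hRy).le)

lemma isLittleO_one_div_abs_of_tendsto_zero {f : ℝ → ℝ} {𝓕 : Filter ℝ} (h𝓕 : 𝓕 ≤ 𝓝[≠] 0)
    (hf : Tendsto f 𝓕 (𝓝 0)) : f =o[𝓕] fun x => 1 / |x| := by
  have habs : Tendsto (fun x : ℝ => ‖1 / |x|‖) 𝓕 atTop := by
    simpa only [one_div, norm_inv, norm_abs_eq_norm] using
      tendsto_norm_inv_nhdsNE_zero_atTop.mono_left h𝓕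
  exact ((isLittleO_one_iff ℝ).2 hf).trans
    ((isLittleO_const_left_of_ne one_ne_zero).2 habs)

section SchwarzschildAdS

variable {M l rS r : ℝ}

lemma Fsads_le (hM : 0 ≤ M) (hr : 0 ≤ r) : Fsads M l r ≤ 1 + r ^ 2 / l ^ 2 := by
  have : 0 ≤ 2 * M / r := by positivity
  unfold Fsads
  linarith

lemma le_Fsads (hr : 0 < r) (hMr : 2 * M ≤ r) : r ^ 2 / l ^ 2 ≤ Fsads M l r := by
  have : 2 * M / r ≤ 1 := (div_le_one hr).2 hMr
  unfold Fsads
  linarith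

lemma strictMonoOn_Fsads (hM : 0 ≤ M) (hl : l ≠ 0) : StrictMonoOn (Fsads M l) (Ioi 0) := by
  intro r (hr : 0 < r) s _ hrs
  have hdiv : 2 * M / s ≤ 2 * M / r := by gcongr
  have hsq : r ^ 2 / l ^ 2 < s ^ 2 / l ^ 2 := by gcongr
  unfold Fsads
  linarith

lemma continuousOn_Fsads : ContinuousOn (Fsads M l) (Ioi 0) := by
  have hdiv : ContinuousOn (fun r : ℝ => 2 * M / r) (Ioi 0) :=
    continuousOn_const.div continuousOn_id fun _ hr => ne_of_gt hr
  exact (continuousOn_const.sub hdiv).add (by fun_prop)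

lemma Fsads_pos (hM : 0 ≤ M) (hl : l ≠ 0) (hrS₀ : 0 < rS) (hrS : Fsads M l rS = 0)
    (hr : rS < r) : 0 < Fsads M l r :=
  hrS.symm.trans_lt (strictMonoOn_Fsads hM hl hrS₀ (hrS₀.trans hr) hr)

lemma integrableOn_inv_Fsads (hM : 0 ≤ M) (hl : l ≠ 0) (hrS₀ : 0 < rS)
    (hrS : Fsads M l rS = 0) (hr : rS < r) :
    IntegrableOn (fun s => (Fsads M l s)⁻¹) (Ioi r) := by
  have hl₂ : 0 < (l ^ 2)⁻¹ := by positivity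
  refine integrableOn_Ioi_inv_of_mul_sq_le hl₂
    (continuousOn_Fsads.mono fun s hs => (hrS₀.trans hr).trans_le hs)
    (fun s hs => (Fsads_pos hM hl hrS₀ hrS (hr.trans_le hs)).ne') ?_
  filter_upwards [eventually_gt_atTop 0, eventually_ge_atTop (2 * M)] with s hs hMs
  exact (inv_mul_eq_div _ _).trans_le (le_Fsads hs hMs)

lemma neg_xcoord_le (hl : l ≠ 0) (hr : 0 < r) (hMr : 2 * M ≤ r) :
    -xcoord M l r ≤ l ^ 2 / r := by
  have hl₂ : 0 < (l ^ 2)⁻¹ := by positivity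
  calc -xcoord M l r = ∫ s in Ioi r, (Fsads M l s)⁻¹ := neg_neg _
    _ ≤ ((l ^ 2)⁻¹ * r)⁻¹ := integral_Ioi_inv_le_of_mul_sq_le hl₂ hr fun s hs =>
        (inv_mul_eq_div _ _).trans_le (le_Fsads (hr.trans hs) (hMr.trans hs.le))
    _ = l ^ 2 / r := by rw [mul_inv, inv_inv, div_eq_mul_inv]

lemma le_neg_xcoord (hM : 0 ≤ M) (hl : l ≠ 0) (hrS₀ : 0 < rS) (hrS : Fsads M l rS = 0)
    (hr : rS < r) : l ^ 2 * r / (l ^ 2 + r ^ 2) ≤ -xcoord M l r := by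
  have hr₀ : 0 < r := hrS₀.trans hr
  have hF : ∀ s > r, Fsads M l s ≤ (1 / r ^ 2 + 1 / l ^ 2) * s ^ 2 := fun s hs => by
    have hone : 1 ≤ s ^ 2 / r ^ 2 := (one_le_div (by positivity)).2 (by gcongr)
    calc Fsads M l s ≤ 1 + s ^ 2 / l ^ 2 := Fsads_le hM (hr₀.trans hs).le
      _ ≤ s ^ 2 / r ^ 2 + s ^ 2 / l ^ 2 := by gcongr
      _ = (1 / r ^ 2 + 1 / l ^ 2) * s ^ 2 := by ring
  calc l ^ 2 * r / (l ^ 2 + r ^ 2) = ((1 / r ^ 2 + 1 / l ^ 2) * r)⁻¹ := by field_simp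
    _ ≤ ∫ s in Ioi r, (Fsads M l s)⁻¹ :=
        le_integral_Ioi_inv_of_le_mul_sq hr₀ (integrableOn_inv_Fsads hM hl hrS₀ hrS hr)
          (fun s hs => Fsads_pos hM hl hrS₀ hrS (hr.trans hs)) hF
    _ = -xcoord M l r := (neg_neg _).symm

lemma xcoord_neg (hM : 0 ≤ M) (hl : l ≠ 0) (hrS₀ : 0 < rS) (hrS : Fsads M l rS = 0)
    (hr : rS < r) : xcoord M l r < 0 := by
  have hr₀ : 0 < r := hrS₀.trans hr
  have hpos : 0 < l ^ 2 * r / (l ^ 2 + r ^ 2) := by positivity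
  exact neg_pos.1 (hpos.trans_le (le_neg_xcoord hM hl hrS₀ hrS hr))

lemma monotoneOn_xcoord (hM : 0 ≤ M) (hl : l ≠ 0) (hrS₀ : 0 < rS) (hrS : Fsads M l rS = 0) :
    MonotoneOn (xcoord M l) (Ioi rS) := by
  intro r hr s _ hrs
  refine neg_le_neg (setIntegral_mono_set (integrableOn_inv_Fsads hM hl hrS₀ hrS hr) ?_
    (Ioi_subset_Ioi hrs).eventuallyLE)
  exact (ae_restrict_iff' measurableSet_Ioi).2 (ae_of_all _ fun t ht =>
    inv_nonneg.2 (Fsads_pos hM hl hrS₀ hrS (hr.trans ht)).le)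

lemma sqrt_Fsads_mem_Icc (hM : 0 ≤ M) (hl : 0 < l) (hr : 0 < r) (hMr : 2 * M ≤ r) :
    √(Fsads M l r) ∈ Icc (r / l) (r / l + l / r) := by
  constructor
  · exact Real.le_sqrt_of_sq_le ((div_pow r l 2).trans_le (le_Fsads hr hMr))
  · refine Real.sqrt_le_iff.2 ⟨by positivity, ?_⟩
    calc Fsads M l r ≤ 1 + r ^ 2 / l ^ 2 := Fsads_le hM hr.le
      _ ≤ 1 + r ^ 2 / l ^ 2 + (1 + (l / r) ^ 2) := le_add_of_nonneg_right (by positivity)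
      _ = (r / l + l / r) ^ 2 := by field_simp; ring

lemma neg_div_xcoord_mem_Icc (hM : 0 ≤ M) (hl : 0 < l) (hrS₀ : 0 < rS)
    (hrS : Fsads M l rS = 0) (hr : rS < r) (hMr : 2 * M ≤ r) :
    -(l / xcoord M l r) ∈ Icc (r / l) (r / l + l / r) := by
  have hr₀ : 0 < r := hrS₀.trans hr
  have hx : 0 < -xcoord M l r := neg_pos.2 (xcoord_neg hM hl.ne' hrS₀ hrS hr)
  rw [← div_neg]
  constructor
  · calc r / l = l / (l ^ 2 / r) := by field_simp
      _ ≤ l / -xcoord M l r := by gcongr; exact neg_xcoord_le hl.ne' hr₀ hMr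
  · calc l / -xcoord M l r ≤ l / (l ^ 2 * r / (l ^ 2 + r ^ 2)) := by
          gcongr; exact le_neg_xcoord hM hl.ne' hrS₀ hrS hr
      _ = r / l + l / r := by field_simp; ring

lemma tendsto_sqrt_Fsads_div (hM : 0 ≤ M) (hl : 0 < l) :
    Tendsto (fun r => √(Fsads M l r) / r) atTop (𝓝 (1 / l)) := by
  have hupper : Tendsto (fun r : ℝ => 1 / l + l / r / r) atTop (𝓝 (1 / l)) := by
    simpa only [add_zero, id_eq] using
      ((tendsto_id.const_div_atTop l).div_atTop tendsto_id).const_add (1 / l)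
  have hmem : ∀ᶠ r in atTop, √(Fsads M l r) / r ∈ Icc (1 / l) (1 / l + l / r / r) := by
    filter_upwards [eventually_gt_atTop 0, eventually_ge_atTop (2 * M)] with r hr hMr
    obtain ⟨hlow, hupp⟩ := sqrt_Fsads_mem_Icc hM hl hr hMr
    constructor
    · calc 1 / l = r / l / r := by field_simp
        _ ≤ √(Fsads M l r) / r := by gcongr
    · calc √(Fsads M l r) / r ≤ (r / l + l / r) / r := by gcongr
        _ = 1 / l + l / r / r := by field_simp
  exact tendsto_of_tendsto_of_tendsto_of_le_of_le' tendsto_const_nhds hupper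
    (hmem.mono fun _ h => h.1) (hmem.mono fun _ h => h.2)

lemma tendsto_sqrt_Fsads_add_div_xcoord (hM : 0 ≤ M) (hl : 0 < l) (hrS₀ : 0 < rS)
    (hrS : Fsads M l rS = 0) :
    Tendsto (fun r => √(Fsads M l r) + l / xcoord M l r) atTop (𝓝 0) := by
  refine squeeze_zero_norm' ?_ (tendsto_id.const_div_atTop l)
  filter_upwards [eventually_gt_atTop rS, eventually_ge_atTop (2 * M)] with r hr hMr
  have hdist := Real.dist_le_of_mem_Icc (sqrt_Fsads_mem_Icc hM hl (hrS₀.trans hr) hMr)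
    (neg_div_xcoord_mem_Icc hM hl hrS₀ hrS hr hMr)
  rwa [dist_eq_norm, sub_neg_eq_add, add_sub_cancel_left] at hdist

end SchwarzschildAdS

/-- `A(x) → 1/l` and `B(x) + l/x → 0` as `x → 0⁻`; in particular
`B(x) - (-l/x) = o(1/|x|)` as `x → 0⁻`. Here `rx` is the inverse of the
Regge–Wheeler coordinate on `(-∞,0)`. -/
theorem stmt3 (M l rS : ℝ) (rx : ℝ → ℝ) (hM : 0 < M) (hl : 0 < l)
    (hrS0 : 0 < rS) (hrS : Fsads M l rS = 0)
    (hrx : ∀ x < (0:ℝ), rS < rx x ∧ xcoord M l (rx x) = x) :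
    Tendsto (Asads M l rx) (nhdsWithin 0 (Set.Iio 0)) (nhds (1/l)) ∧
    Tendsto (fun x => Bsads M l rx x + l/x) (nhdsWithin 0 (Set.Iio 0)) (nhds 0) ∧
    (fun x => Bsads M l rx x - (-l/x)) =o[nhdsWithin 0 (Set.Iio 0)] (fun x => 1/|x|) := by
  have hrx_top : Tendsto rx (𝓝[<] 0) atTop :=
    tendsto_atTop_of_monotoneOn_rightInverse (monotoneOn_xcoord hM.le hl.ne' hrS0 hrS)
      (fun _ => xcoord_neg hM.le hl.ne' hrS0 hrS) hrx
  have hB : Tendsto (fun x => Bsads M l rx x + l / x) (𝓝[<] 0) (𝓝 0) := by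
    refine ((tendsto_sqrt_Fsads_add_div_xcoord hM.le hl hrS0 hrS).comp hrx_top).congr' ?_
    filter_upwards [self_mem_nhdsWithin] with x hx
    simp only [Function.comp_apply, Bsads, (hrx x hx).2]
  refine ⟨(tendsto_sqrt_Fsads_div hM.le hl).comp hrx_top, hB, ?_⟩
  simp only [neg_div, sub_neg_eq_add]
  exact isLittleO_one_div_abs_of_tendsto_zero (nhdsLT_le_nhdsNE 0) hB
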